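/- Let I be an instance with n agents and n objects and let v be a unit-sum valuation profile consistent with I. Set t_1 = 1/n^{1/3} and t_i = 1/(min{i, n^{1/3}}·n^{2/3}) for 2 ≤ i ≤ n. Let μ_MM be obtained from a maximum-weight matching of G_I under the weights assigning to each edge e = (a_i, h_j) of rank r the weight t_r if v_i(h_j) ≥ t_r and 0 otherwise, by deleting all edges of weight 0. Then for every matching μ* of G_I, letting H = {(a_i, h_j) ∈ μ* : v_i(h_j) ≥ t_r where r is the rank of (a_i, h_j)}, it holds that Σ_{(a_i,h_j) ∈ H} v_i(h_j) ≤ n^{2/3}·SW(μ_MM | v). -/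

import Mathlib

open Finset
open scoped Classical

/-- A one-sided matching instance with `n` agents and `n` objects.  Agent `i` has a
nonempty acceptable set `accept i` and a weak order `pref i` on it
(`pref i h h'` means agent `i` weakly prefers object `h` to object `h'`). -/
structure OSMInstance (n : ℕ) where
  accept : Fin n → Finset (Fin n)
  accept_nonempty : ∀ i, (accept i).Nonempty
  pref : Fin n → Fin n → Fin n → Prop
  pref_refl : ∀ i h, h ∈ accept i → pref i h h
  pref_trans : ∀ i h₁ h₂ h₃, h₁ ∈ accept i → h₂ ∈ accept i → h₃ ∈ accept i →
    pref i h₁ h₂ → pref i h₂ h₃ → pref i h₁ h₃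
  pref_total : ∀ i h₁ h₂, h₁ ∈ accept i → h₂ ∈ accept i → pref i h₁ h₂ ∨ pref i h₂ h₁

namespace OSMInstance

variable {n : ℕ}

/-- Agent `i` strictly prefers object `h` to object `h'`. -/
def strictPref (I : OSMInstance n) (i h h' : Fin n) : Prop :=
  I.pref i h h' ∧ ¬ I.pref i h' h

/-- The rank of the edge `(i, h)` of `G_I`: one plus the number of acceptable objects
that agent `i` strictly prefers to `h`. -/
noncomputable def edgeRank (I : OSMInstance n) (e : Fin n × Fin n) : ℕ :=
  ((I.accept e.1).filter (fun h' => I.strictPref e.1 h' e.2)).card + 1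

/-- A matching of `G_I`: a set of acceptable (agent, object) pairs in which every agent
and every object occurs at most once. -/
def IsMatching (I : OSMInstance n) (μ : Finset (Fin n × Fin n)) : Prop :=
  (∀ e ∈ μ, e.2 ∈ I.accept e.1) ∧
  (∀ e ∈ μ, ∀ e' ∈ μ, e.1 = e'.1 → e = e') ∧
  (∀ e ∈ μ, ∀ e' ∈ μ, e.2 = e'.2 → e = e')

/-- Total weight of a set of edges under the edge weights `w`. -/
def weightSum (w : Fin n × Fin n → ℝ) (μ : Finset (Fin n × Fin n)) : ℝ :=
  ∑ e ∈ μ, w e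

/-- Social welfare of the set of edges `μ` under the valuation profile `v`. -/
def SW (_I : OSMInstance n) (v : Fin n → Fin n → ℝ) (μ : Finset (Fin n × Fin n)) : ℝ :=
  ∑ e ∈ μ, v e.1 e.2

/-- `μ` is a maximum-weight matching of `G_I` with respect to edge weights `w`. -/
def IsMaxWeightMatching (I : OSMInstance n) (w : Fin n × Fin n → ℝ)
    (μ : Finset (Fin n × Fin n)) : Prop :=
  I.IsMatching μ ∧ ∀ μ', I.IsMatching μ' → weightSum w μ' ≤ weightSum w μ

/-- `μ` is a priority-`p` matching: a maximum-weight matching when every rank-`r` edge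
gets weight `p r`. -/
noncomputable def IsPriorityMatching (I : OSMInstance n) (p : ℕ → ℝ)
    (μ : Finset (Fin n × Fin n)) : Prop :=
  I.IsMaxWeightMatching (fun e => p (I.edgeRank e)) μ

/-- `v` is a valuation profile consistent with the instance: values lie in `[0,1]`,
unacceptable objects have value `0`, and on acceptable objects the values represent
the weak order. -/
def Consistent (I : OSMInstance n) (v : Fin n → Fin n → ℝ) : Prop :=
  (∀ i h, 0 ≤ v i h ∧ v i h ≤ 1) ∧
  (∀ i h, h ∉ I.accept i → v i h = 0) ∧
  (∀ i h h', h ∈ I.accept i → h' ∈ I.accept i → (I.pref i h h' ↔ v i h' ≤ v i h))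

/-- Unit-sum valuations: each agent's values over acceptable objects sum to `1`. -/
def UnitSum (I : OSMInstance n) (v : Fin n → Fin n → ℝ) : Prop :=
  ∀ i, ∑ h ∈ I.accept i, v i h = 1

/-- Unit-range valuations: each agent values some acceptable object `1`, some
acceptable object `0`, and has two non-equivalent acceptable objects. -/
def UnitRange (I : OSMInstance n) (v : Fin n → Fin n → ℝ) : Prop :=
  ∀ i, (∃ h ∈ I.accept i, v i h = 1) ∧ (∃ h ∈ I.accept i, v i h = 0) ∧
    ∃ h ∈ I.accept i, ∃ h' ∈ I.accept i, I.strictPref i h h'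

/-- Agent `i` is unmatched in `μ`. -/
def Unmatched (_I : OSMInstance n) (μ : Finset (Fin n × Fin n)) (i : Fin n) : Prop :=
  ∀ h, (i, h) ∉ μ

/-- Agent `i` weakly prefers their allocation in `μ'` to their allocation in `μ`
(being unmatched is strictly worse than receiving any acceptable object). -/
def WeakImprove (I : OSMInstance n) (μ' μ : Finset (Fin n × Fin n)) (i : Fin n) : Prop :=
  I.Unmatched μ i ∨ ∃ h h', (i, h) ∈ μ ∧ (i, h') ∈ μ' ∧ I.pref i h' h

/-- Agent `i` strictly prefers their allocation in `μ'` to their allocation in `μ`. -/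
def StrictImprove (I : OSMInstance n) (μ' μ : Finset (Fin n × Fin n)) (i : Fin n) : Prop :=
  (I.Unmatched μ i ∧ ∃ h', (i, h') ∈ μ') ∨
    ∃ h h', (i, h) ∈ μ ∧ (i, h') ∈ μ' ∧ I.strictPref i h' h

/-- `μ` is a Pareto optimal matching of `G_I`. -/
def ParetoOptimal (I : OSMInstance n) (μ : Finset (Fin n × Fin n)) : Prop :=
  I.IsMatching μ ∧
    ¬ ∃ μ', I.IsMatching μ' ∧ (∀ i, I.WeakImprove μ' μ i) ∧ ∃ i, I.StrictImprove μ' μ i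

/-- `sig I μ r` is the number of rank-`r` edges of `μ` (as an integer). -/
noncomputable def sig (I : OSMInstance n) (μ : Finset (Fin n × Fin n)) (r : ℕ) : ℤ :=
  ((μ.filter (fun e => I.edgeRank e = r)).card : ℤ)

end OSMInstance

/-- Lexicographic comparison `f ≤ g` of the length-`len` tuples `(f 0, …, f (len-1))`
and `(g 0, …, g (len-1))`. -/
def LexLe (len : ℕ) (f g : ℕ → ℤ) : Prop :=
  (∀ j < len, f j = g j) ∨ ∃ j < len, (∀ i < j, f i = g i) ∧ f j < g j

namespace OSMInstance

variable {n : ℕ}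

/-- `μ` is a rank-maximal matching: it lexicographically maximizes `(s_1, …, s_n)`. -/
noncomputable def RankMaximal (I : OSMInstance n) (μ : Finset (Fin n × Fin n)) : Prop :=
  I.IsMatching μ ∧ ∀ μ', I.IsMatching μ' →
    LexLe n (fun j => I.sig μ' (j + 1)) (fun j => I.sig μ (j + 1))

/-- `μ` is a max-cardinality rank-maximal matching: it lexicographically maximizes
`(Σ_i s_i, s_1, …, s_n)`. -/
noncomputable def MaxCardRankMaximal (I : OSMInstance n) (μ : Finset (Fin n × Fin n)) : Prop :=
  I.IsMatching μ ∧ ∀ μ', I.IsMatching μ' →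
    LexLe (n + 1) (fun j => if j = 0 then (μ'.card : ℤ) else I.sig μ' j)
      (fun j => if j = 0 then (μ.card : ℤ) else I.sig μ j)

/-- `μ` is a fair matching: it lexicographically maximizes
`(Σ_i s_i, -s_n, -s_(n-1), …, -s_1)`. -/
noncomputable def FairMatching (I : OSMInstance n) (μ : Finset (Fin n × Fin n)) : Prop :=
  I.IsMatching μ ∧ ∀ μ', I.IsMatching μ' →
    LexLe (n + 1) (fun j => if j = 0 then (μ'.card : ℤ) else -I.sig μ' (n + 1 - j))
      (fun j => if j = 0 then (μ.card : ℤ) else -I.sig μ (n + 1 - j))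

end OSMInstance

/-- The priority vector for rank-maximal matchings: a rank-`r` edge gets weight
`n ^ (2 * (n - r + 1))`. -/
noncomputable def pRankMaximal (n : ℕ) : ℕ → ℝ :=
  fun r => (n : ℝ) ^ (2 * (n - r + 1))

/-- The priority vector for max-cardinality rank-maximal matchings: a rank-`r` edge gets
weight `n ^ (2 * n) + n ^ (2 * (n - r))`. -/
noncomputable def pMaxCardRankMaximal (n : ℕ) : ℕ → ℝ :=
  fun r => (n : ℝ) ^ (2 * n) + (n : ℝ) ^ (2 * (n - r))

/-- The priority vector for fair matchings: a rank-`r` edge gets weight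
`4 * n ^ (2 * n) - 2 * n ^ (r - 1)`. -/
noncomputable def pFairVec (n : ℕ) : ℕ → ℝ :=
  fun r => 4 * (n : ℝ) ^ (2 * n) - 2 * (n : ℝ) ^ (r - 1)

/-- The set `𝕡` of the three priority vectors of interest. -/
noncomputable def PrioritySet (n : ℕ) : Set (ℕ → ℝ) :=
  {pRankMaximal n, pMaxCardRankMaximal n, pFairVec n}

/-- The four matching properties considered: Pareto optimal, rank-maximal,
max-cardinality rank-maximal, and fair. -/
inductive MatchProp where
  | po | rm | mcrm | fair

/-- `μ` satisfies the property `X` with respect to the instance `I`. -/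
noncomputable def SatisfiesProp {n : ℕ} (X : MatchProp) (I : OSMInstance n)
    (μ : Finset (Fin n × Fin n)) : Prop :=
  match X with
  | .po => I.ParetoOptimal μ
  | .rm => I.RankMaximal μ
  | .mcrm => I.MaxCardRankMaximal μ
  | .fair => I.FairMatching μ

namespace OSMInstance

variable {n : ℕ}

/-- A subset of a matching is a matching. -/
theorem IsMatching.subset {I : OSMInstance n} {μ μ' : Finset (Fin n × Fin n)}
    (hμ : I.IsMatching μ) (h : μ' ⊆ μ) : I.IsMatching μ' :=
  ⟨fun e he => hμ.1 e (h he), fun e he e' he' => hμ.2.1 e (h he) e' (h he'),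
    fun e he e' he' => hμ.2.2 e (h he) e' (h he')⟩

/-- The acceptable objects that agent `e.1` strictly prefers to `e.2` form, together with `e.2`
itself, a set of `I.edgeRank e` objects. -/
theorem card_insert_strictPref (I : OSMInstance n) (e : Fin n × Fin n) :
    (insert e.2 ((I.accept e.1).filter (fun h => I.strictPref e.1 h e.2))).card =
      I.edgeRank e := by
  rw [card_insert_of_notMem]
  · rfl
  · intro h
    have h' := (mem_filter.1 h).2
    exact h'.2 h'.1

theorem insert_strictPref_subset (I : OSMInstance n) {e : Fin n × Fin n}
    (he : e.2 ∈ I.accept e.1) :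
    insert e.2 ((I.accept e.1).filter (fun h => I.strictPref e.1 h e.2)) ⊆ I.accept e.1 :=
  insert_subset he (filter_subset _ _)

theorem edgeRank_le (I : OSMInstance n) (e : Fin n × Fin n) : I.edgeRank e ≤ n := by
  rw [← I.card_insert_strictPref e]
  exact (card_le_univ _).trans_eq (Fintype.card_fin n)

/-- Under unit-sum valuations an acceptable edge of rank `r` has value at most `1 / r`. -/
theorem edgeRank_mul_value_le_one {I : OSMInstance n} {v : Fin n → Fin n → ℝ}
    (hv : I.Consistent v) (hus : I.UnitSum v) {e : Fin n × Fin n} (he : e.2 ∈ I.accept e.1) :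
    (I.edgeRank e : ℝ) * v e.1 e.2 ≤ 1 := by
  rw [← hus e.1, ← I.card_insert_strictPref e, ← nsmul_eq_mul]
  refine (card_nsmul_le_sum _ (v e.1) _ fun h hh => ?_).trans
    (sum_le_sum_of_subset_of_nonneg (I.insert_strictPref_subset he) fun h _ _ => (hv.1 e.1 h).1)
  rcases mem_insert.1 hh with rfl | hh
  · exact le_rfl
  · obtain ⟨hacc, hpref⟩ := mem_filter.1 hh
    exact (hv.2.2 e.1 h e.2 hacc he).1 hpref.1

/-- The value of an acceptable edge of rank `r` is at most `n ^ (2/3)` times the threshold `t r`. -/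
theorem value_le_rpow_mul_threshold {I : OSMInstance n} {v : Fin n → Fin n → ℝ}
    (hv : I.Consistent v) (hus : I.UnitSum v) {t : ℕ → ℝ}
    (ht1 : t 1 = 1 / (n : ℝ) ^ ((1 : ℝ) / 3))
    (ht : ∀ i, 2 ≤ i → i ≤ n →
      t i = 1 / (min (i : ℝ) ((n : ℝ) ^ ((1 : ℝ) / 3)) * (n : ℝ) ^ ((2 : ℝ) / 3)))
    {e : Fin n × Fin n} (he : e.2 ∈ I.accept e.1) :
    v e.1 e.2 ≤ (n : ℝ) ^ ((2 : ℝ) / 3) * t (I.edgeRank e) := by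
  have hn : (1 : ℝ) ≤ n := by exact_mod_cast e.1.pos
  have hroot : (0 : ℝ) < (n : ℝ) ^ ((1 : ℝ) / 3) := by positivity
  have hpow : (0 : ℝ) < (n : ℝ) ^ ((2 : ℝ) / 3) := by positivity
  have hrank : 1 ≤ I.edgeRank e := Nat.le_add_left 1 _
  rcases hrank.eq_or_lt with h1 | h2
  · rw [← h1, ht1, mul_one_div]
    refine (hv.1 e.1 e.2).2.trans ((one_le_div hroot).2 ?_)
    exact Real.rpow_le_rpow_of_exponent_le hn (by norm_num)
  · have hr : (0 : ℝ) < I.edgeRank e := by exact_mod_cast hrank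
    have hmin : 0 < min (I.edgeRank e : ℝ) ((n : ℝ) ^ ((1 : ℝ) / 3)) := lt_min hr hroot
    rw [ht _ h2 (I.edgeRank_le e), mul_one_div, div_mul_cancel_right₀ hpow.ne', ← one_div]
    calc v e.1 e.2 ≤ 1 / (I.edgeRank e : ℝ) := by
          rw [le_div_iff₀ hr, mul_comm]
          exact edgeRank_mul_value_le_one hv hus he
      _ ≤ _ := one_div_le_one_div_of_le hmin (min_le_left _ _)

end OSMInstance

/-- the high-value part of any matching has welfare at most
`n^(2/3)` times the welfare of the (filtered) maximum-weight matching under the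
non-adaptive threshold weights, for unit-sum valuations. -/
theorem highValue_bound_PO {n : ℕ} (I : OSMInstance n)
    (v : Fin n → Fin n → ℝ) (hv : I.Consistent v) (hus : I.UnitSum v)
    (t : ℕ → ℝ) (ht1 : t 1 = 1 / (n : ℝ) ^ ((1 : ℝ) / 3))
    (ht : ∀ i, 2 ≤ i → i ≤ n →
      t i = 1 / (min (i : ℝ) ((n : ℝ) ^ ((1 : ℝ) / 3)) * (n : ℝ) ^ ((2 : ℝ) / 3)))
    (w : Fin n × Fin n → ℝ)
    (hw : ∀ e, w e = if t (I.edgeRank e) ≤ v e.1 e.2 then t (I.edgeRank e) else 0)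
    (μ₀ : Finset (Fin n × Fin n)) (hμ₀ : I.IsMaxWeightMatching w μ₀)
    (μMM : Finset (Fin n × Fin n)) (hμMM : μMM = μ₀.filter (fun e => w e ≠ 0))
    (μstar : Finset (Fin n × Fin n)) (hstar : I.IsMatching μstar) :
    ∑ e ∈ μstar.filter (fun e => t (I.edgeRank e) ≤ v e.1 e.2), v e.1 e.2 ≤
      (n : ℝ) ^ ((2 : ℝ) / 3) * I.SW v μMM := by
  subst hμMM
  have hsub := filter_subset (fun e => t (I.edgeRank e) ≤ v e.1 e.2) μstar
  have hpow : (0 : ℝ) ≤ (n : ℝ) ^ ((2 : ℝ) / 3) := by positivity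
  calc ∑ e ∈ μstar.filter (fun e => t (I.edgeRank e) ≤ v e.1 e.2), v e.1 e.2
      ≤ ∑ e ∈ μstar.filter (fun e => t (I.edgeRank e) ≤ v e.1 e.2),
          (n : ℝ) ^ ((2 : ℝ) / 3) * w e := by
        refine sum_le_sum fun e he => ?_
        rw [hw e, if_pos (mem_filter.1 he).2]
        exact OSMInstance.value_le_rpow_mul_threshold hv hus ht1 ht (hstar.1 e (hsub he))
    _ = (n : ℝ) ^ ((2 : ℝ) / 3) * OSMInstance.weightSum w
          (μstar.filter (fun e => t (I.edgeRank e) ≤ v e.1 e.2)) := (mul_sum _ _ _).symm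
    _ ≤ (n : ℝ) ^ ((2 : ℝ) / 3) * OSMInstance.weightSum w μ₀ :=
        mul_le_mul_of_nonneg_left (hμ₀.2 _ (hstar.subset hsub)) hpow
    _ ≤ (n : ℝ) ^ ((2 : ℝ) / 3) * I.SW v (μ₀.filter (fun e => w e ≠ 0)) := by
        refine mul_le_mul_of_nonneg_left ?_ hpow
        rw [OSMInstance.weightSum, ← sum_filter_ne_zero]
        refine sum_le_sum fun e _ => ?_
        rw [hw e]
        split_ifs with hle
        · exact hle
        · exact (hv.1 e.1 e.2).1
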